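/- Let n | q - 1, r, δ positive integers with δ ≥ 2 and (r + δ - 1) | n, ν = n/(r+δ-1), b coprime to n, and α a primitive n-th root of unity in F_q. Fix t ∈ {0,...,n-1}, i ∈ {0,...,r-1}, and ℓ, j with either (0 ≤ ℓ ≤ ν-3 and 0 ≤ j ≤ i) or (ℓ = ν-2 and j = i). Let B = {α^0, α^b, ..., α^{(δ-2)b}} and A = {α^t, α^{t+b}, ..., α^{t+(ℓ(r+δ-1)+i)b}} ∪ {α^{t+((ℓ+1)(r+δ-1)+j)b}, α^{t+((ℓ+2)(r+δ-1)+j)b}, ..., α^{t+((ν-1)(r+δ-1)+j)b}}. Then the cyclic code C_{AB} with complete defining set AB is an optimal cyclic (r, δ)-LRC of length n over F_q with dimension (ν - ℓ)r - i and minimum distance δ + i + ℓ(r + δ - 1). -/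

import Mathlib

noncomputable section

open Polynomial
open scoped Pointwise

/-- The cyclic code of length `n` over `K` whose complete defining set is `Z ⊆ L`,
where `L` is an extension of `K` containing the `n`-th roots of unity:
codewords are those `c` whose associated polynomial vanishes on `Z`. -/
def cyclicCodeOn (K L : Type) [Field K] [Field L] [Algebra K L]
    (n : ℕ) (Z : Set L) : Submodule K (Fin n → K) where
  carrier := {c | ∀ β ∈ Z, ∑ i : Fin n, algebraMap K L (c i) * β ^ (i : ℕ) = 0}
  add_mem' := by
    intro a b ha hb β hβ
    simp only [Pi.add_apply, map_add, add_mul, Finset.sum_add_distrib]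
    rw [ha β hβ, hb β hβ, add_zero]
  zero_mem' := by intro β hβ; simp
  smul_mem' := by
    intro r a ha β hβ
    simp only [Pi.smul_apply, smul_eq_mul, map_mul, mul_assoc, ← Finset.mul_sum]
    rw [ha β hβ, mul_zero]

/-- Cyclic code of length `n` over `F` with complete defining set `Z ⊆ F`. -/
abbrev cyclicCode (F : Type) [Field F] (n : ℕ) (Z : Set F) : Submodule F (Fin n → F) :=
  cyclicCodeOn F F n Z

/-- The dual code of a code `C ⊆ F^n` (under the standard inner product). -/
def dualSet (F : Type) [Field F] (n : ℕ) (C : Set (Fin n → F)) : Set (Fin n → F) :=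
  {v | ∀ c ∈ C, ∑ i : Fin n, v i * c i = 0}

open Classical in
/-- Hamming weight of a vector. -/
def wt {F : Type} [Zero F] {n : ℕ} (c : Fin n → F) : ℕ :=
  (Finset.univ.filter (fun i => c i ≠ 0)).card

/-- `d` is the minimum Hamming distance (= minimum nonzero weight) of the code `C`. -/
def IsMinDist {F : Type} [Zero F] {n : ℕ} (C : Set (Fin n → F)) (d : ℕ) : Prop :=
  (∃ c ∈ C, c ≠ 0 ∧ wt c = d) ∧ ∀ c ∈ C, c ≠ 0 → d ≤ wt c

open Classical in
/-- `C` has `(r, δ)`-locality: every coordinate lies in a recovery set `S` of size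
at most `r + δ - 1` such that the punctured code `C|_S` has minimum distance `≥ δ`. -/
def HasLocality {F : Type} [Zero F] {n : ℕ} (C : Set (Fin n → F)) (r δ : ℕ) : Prop :=
  ∀ i : Fin n, ∃ S : Finset (Fin n), i ∈ S ∧ S.card ≤ r + δ - 1 ∧
    ∀ c ∈ C, ∀ c' ∈ C, (∃ j ∈ S, c j ≠ c' j) →
      δ ≤ (S.filter (fun j => c j ≠ c' j)).card

/-- The polynomial `c₀ + c₁ x + ⋯ + c_{n-1} x^{n-1}` associated to a vector. -/
def vecPoly {F : Type} [Semiring F] {n : ℕ} (c : Fin n → F) : Polynomial F :=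
  ∑ i : Fin n, Polynomial.C (c i) * Polynomial.X ^ (i : ℕ)

/-- The cyclic code of length `n` generated by `g(x)` (a divisor of `x^n - 1`). -/
def codeOfGen (F : Type) [Field F] (n : ℕ) (g : Polynomial F) : Set (Fin n → F) :=
  {c | g ∣ vecPoly c}

/-- Ceiling division `⌈a / b⌉` on naturals. -/
def ceilDiv' (a b : ℕ) : ℕ := (a + b - 1) / b

/-- The code parameters meet the Singleton-like bound for `(r, δ)`-LRCs:
`d = n - k - (⌈k/r⌉ - 1)(δ - 1) + 1`. -/
def SingletonOpt (n k r δ d : ℕ) : Prop :=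
  d = n - k - (ceilDiv' k r - 1) * (δ - 1) + 1

/-!
Put `β = α ^ b`, `γ = α ^ t`, `m = r + δ - 1` and `ν = n / m`. The roots of the code are the
`γ β ^ e` with `e` in a set of exponents that contains `u m + j + d` for all `u < ν` and
`d < δ - 1`. For each `d`, the `ν` checks obtained by varying `u` form a Vandermonde system in
the `ν`-th roots of unity `(β ^ m) ^ s`, so they split into one check on each residue class of
coordinates modulo `ν`.
Varying `d` leaves `δ - 1` consecutive checks on each class, which force `δ` nonzero entries on
every class where a codeword does not vanish: the classes, of size `m`, are recovery sets.

The dimension is `n` minus the number of roots, and the initial run of `ℓ m + i + δ - 1`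
consecutive roots gives the lower bound on the distance by the BCH argument. The upper bound holds
for every linear code with `(r, δ)`-locality: adjoining recovery sets one at a time, each at the
cost of at most `r` free coordinates, determines `δ - 1` further coordinates per step, and a
nonzero codeword vanishing on all of them has small weight.
-/

section Vandermonde

open Finset

variable {R ι : Type*} [CommRing R] [IsDomain R] {S : Finset ι} {f y : ι → R}

theorem eq_zero_of_sum_mul_pow_eq_zero (hy : Set.InjOn y S)
    (h : ∀ e < #S, ∑ p ∈ S, f p * y p ^ e = 0) : ∀ p ∈ S, f p = 0 := by
  let x : Fin #S → S := S.equivFin.symm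
  have hinj : Function.Injective (fun k => y (x k)) :=
    hy.injective.comp S.equivFin.symm.injective
  have hzero : (fun k => f (x k)) = 0 := by
    refine Matrix.eq_zero_of_forall_pow_sum_mul_pow_eq_zero hinj fun e => ?_
    rw [← h e e.2, ← sum_coe_sort S]
    exact Equiv.sum_comp S.equivFin.symm fun p : S => f p * y p ^ (e : ℕ)
  intro p hp
  simpa [x] using congrFun hzero (S.equivFin ⟨p, hp⟩)

theorem lt_card_ne_zero_of_sum_mul_pow_eq_zero [DecidableEq R] {D : ℕ} (hy : Set.InjOn y S)
    (h : ∀ e < D, ∑ p ∈ S, f p * y p ^ e = 0) (hf : ∃ p ∈ S, f p ≠ 0) :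
    D < #{p ∈ S | f p ≠ 0} := by
  by_contra! hle
  obtain ⟨p, hp, hfp⟩ := hf
  refine hfp (eq_zero_of_sum_mul_pow_eq_zero (S := {p ∈ S | f p ≠ 0}) (f := f)
    (hy.mono (filter_subset _ S)) (fun e he => ?_) p (mem_filter.2 ⟨hp, hfp⟩))
  calc ∑ p ∈ S with f p ≠ 0, f p * y p ^ e = ∑ p ∈ S, f p * y p ^ e :=
        sum_filter_of_ne fun p _ hne => left_ne_zero_of_mul hne
    _ = 0 := h e (he.trans_le hle)

end Vandermonde

section CyclicCode

open Finset Module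

variable {F : Type} [Field F] {n : ℕ}

theorem mem_cyclicCode_iff {Z : Set F} {c : Fin n → F} :
    c ∈ cyclicCode F n Z ↔ ∀ β ∈ Z, ∑ p : Fin n, c p * β ^ (p : ℕ) = 0 :=
  Iff.rfl

theorem exists_forall_sum_mul_pow_eq {ι : Type*} {S : Finset ι} {v : ι → F}
    (hv : Set.InjOn v S) (hS : #S ≤ n) (w : ι → F) :
    ∃ c : Fin n → F, ∀ e ∈ S, ∑ p, c p * v e ^ (p : ℕ) = w e := by
  classical
  let P := Lagrange.interpolate S v w
  have hP : P.degree < n :=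
    (Lagrange.degree_interpolate_lt w hv).trans_le (by exact_mod_cast hS)
  refine ⟨fun p => P.coeff p, fun e he => ?_⟩
  rw [← Lagrange.eval_interpolate_at_node w hv he, Polynomial.eval_eq_sum]
  exact Polynomial.sum_fin (fun k a => a * v e ^ k) (by simp) hP

theorem finrank_cyclicCode_image {ι : Type*} {S : Finset ι} {v : ι → F} (hv : Set.InjOn v S)
    (hS : #S ≤ n) : finrank F (cyclicCode F n (v '' S)) = n - #S := by
  let Φ : (Fin n → F) →ₗ[F] (S → F) :=
    (Matrix.of fun (e : S) (p : Fin n) => v e ^ (p : ℕ)).mulVecLin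
  have hΦ (c : Fin n → F) (e : S) : Φ c e = ∑ p, c p * v e ^ (p : ℕ) := by
    simp [Φ, Matrix.mulVec, dotProduct, mul_comm]
  have hsurj : LinearMap.range Φ = ⊤ := by
    refine LinearMap.range_eq_top.2 fun w => ?_
    obtain ⟨c, hc⟩ := exists_forall_sum_mul_pow_eq hv hS (Function.extend Subtype.val w 0)
    exact ⟨c, funext fun e => by rw [hΦ, hc e e.2, Subtype.val_injective.extend_apply]⟩
  have hker : cyclicCode F n (v '' S) = LinearMap.ker Φ := by
    ext c
    simp [mem_cyclicCode_iff, funext_iff, hΦ]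
  have hrank := Φ.finrank_range_add_finrank_ker
  rw [hsurj, finrank_top, finrank_fintype_fun_eq_card, finrank_fintype_fun_eq_card,
    Fintype.card_coe, Fintype.card_fin] at hrank
  rw [hker]
  omega

variable {β γ : F} {Z : Set F} {c : Fin n → F}

theorem lt_wt_of_mem_cyclicCode (hβ : IsPrimitiveRoot β n) (hγ : γ ≠ 0) {D : ℕ}
    (hZ : ∀ e < D, γ * β ^ e ∈ Z) (hc : c ∈ cyclicCode F n Z) (hc0 : c ≠ 0) : D < wt c := by
  classical
  obtain ⟨p, hp⟩ := Function.ne_iff.1 hc0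
  have hsum : ∀ e < D, ∑ p, c p * γ ^ (p : ℕ) * (β ^ (p : ℕ)) ^ e = 0 := fun e he => by
    rw [← mem_cyclicCode_iff.1 hc _ (hZ e he)]
    exact sum_congr rfl fun p _ => by ring
  have hlt := lt_card_ne_zero_of_sum_mul_pow_eq_zero
    (fun p _ q _ h => Fin.ext (hβ.pow_inj p.2 q.2 h)) hsum
    ⟨p, mem_univ p, mul_ne_zero hp (pow_ne_zero _ hγ)⟩
  simpa [wt, hγ] using hlt

/-- The coordinates congruent to `s` modulo `ν`, which are the recovery sets of the cyclic codes
considered here. -/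
def residueClass (n ν s : ℕ) : Finset (Fin n) :=
  {p | (p : ℕ) % ν = s}

theorem mem_residueClass {ν s : ℕ} {p : Fin n} : p ∈ residueClass n ν s ↔ (p : ℕ) % ν = s := by
  simp [residueClass]

theorem sum_residueClass_eq_zero {ν s : ℕ} {η : F} (hη : IsPrimitiveRoot η ν)
    (hZ : ∀ u < ν, γ * η ^ u ∈ Z) (hc : c ∈ cyclicCode F n Z) (hs : s < ν) :
    ∑ p ∈ residueClass n ν s, c p * γ ^ (p : ℕ) = 0 := by
  refine eq_zero_of_sum_mul_pow_eq_zero (S := range ν) (y := fun s => η ^ s)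
    (f := fun s => ∑ p ∈ residueClass n ν s, c p * γ ^ (p : ℕ)) hη.injOn_pow
    (fun u hu => ?_) s (mem_range.2 hs)
  rw [card_range] at hu
  have hmod (p : Fin n) : (p : ℕ) % ν ∈ range ν := mem_range.2 (Nat.mod_lt _ (by omega))
  rw [← mem_cyclicCode_iff.1 hc _ (hZ u hu), ← sum_fiberwise_of_maps_to fun p _ => hmod p]
  refine sum_congr rfl fun s _ => ?_
  rw [sum_mul]
  refine sum_congr rfl fun p hp => ?_
  have hηp : η ^ s = η ^ (p : ℕ) := by
    rw [← mem_residueClass.1 hp, hη.eq_orderOf, pow_mod_orderOf]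
  rw [hηp]
  ring

theorem lt_card_ne_zero_residueClass [DecidableEq F] (hβ : IsPrimitiveRoot β n) (hγ : γ ≠ 0)
    {ν s D : ℕ} {η : F} (hη : IsPrimitiveRoot η ν)
    (hZ : ∀ u < ν, ∀ e < D, γ * η ^ u * β ^ e ∈ Z) (hc : c ∈ cyclicCode F n Z) (hs : s < ν)
    (hcs : ∃ p ∈ residueClass n ν s, c p ≠ 0) : D < #{p ∈ residueClass n ν s | c p ≠ 0} := by
  obtain ⟨p, hps, hp⟩ := hcs
  have hsum : ∀ e < D, ∑ p ∈ residueClass n ν s, c p * γ ^ (p : ℕ) * (β ^ (p : ℕ)) ^ e = 0 := by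
    intro e he
    have hZe : ∀ u < ν, γ * β ^ e * η ^ u ∈ Z := fun u hu => by
      simpa only [mul_right_comm] using hZ u hu e he
    rw [← sum_residueClass_eq_zero hη hZe hc hs]
    exact sum_congr rfl fun p _ => by ring
  have hlt := lt_card_ne_zero_of_sum_mul_pow_eq_zero
    (fun p _ q _ h => Fin.ext (hβ.pow_inj p.2 q.2 h)) hsum
    ⟨p, hps, mul_ne_zero hp (pow_ne_zero _ hγ)⟩
  simpa [hγ] using hlt

theorem card_residueClass_le {ν m : ℕ} (hn : n = ν * m) (s : ℕ) :
    #(residueClass n ν s) ≤ m := by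
  rw [← card_range m]
  refine card_le_card_of_injOn (fun p => (p : ℕ) / ν)
    (fun p _ => by simpa using Nat.div_lt_of_lt_mul (hn ▸ p.2)) fun p hp q hq hdiv => Fin.ext ?_
  have hmod : (p : ℕ) % ν = q % ν :=
    (mem_residueClass.1 hp).trans (mem_residueClass.1 hq).symm
  calc (p : ℕ) = p % ν + ν * (p / ν) := (Nat.mod_add_div p ν).symm
    _ = q % ν + ν * (q / ν) := by rw [hmod, show (p : ℕ) / ν = q / ν from hdiv]
    _ = q := Nat.mod_add_div q ν

open Classical in
theorem hasLocality_submodule_iff {C : Submodule F (Fin n → F)} {r δ : ℕ} :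
    HasLocality (C : Set (Fin n → F)) r δ ↔ ∀ p, ∃ S : Finset (Fin n), p ∈ S ∧ #S ≤ r + δ - 1 ∧
      ∀ c ∈ C, (∃ q ∈ S, c q ≠ 0) → δ ≤ #{q ∈ S | c q ≠ 0} := by
  refine forall_congr' fun p => exists_congr fun S => and_congr_right fun _ =>
    and_congr_right fun _ => ⟨fun h c hc hne => ?_, fun h c hc c' hc' hne => ?_⟩
  · simpa using h c hc 0 C.zero_mem hne
  · simpa [sub_ne_zero] using h (c - c') (C.sub_mem hc hc') (by simpa [sub_ne_zero] using hne)

theorem hasLocality_cyclicCode (hβ : IsPrimitiveRoot β n) (hγ : γ ≠ 0) {ν r δ : ℕ}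
    (hn : n = ν * (r + δ - 1))
    (hZ : ∀ u < ν, ∀ e < δ - 1, γ * (β ^ (r + δ - 1)) ^ u * β ^ e ∈ Z) :
    HasLocality (cyclicCode F n Z : Set (Fin n → F)) r δ := by
  classical
  refine hasLocality_submodule_iff.2 fun p => ⟨residueClass n ν (p % ν), mem_residueClass.2 rfl,
    card_residueClass_le hn _, fun c hc hne => ?_⟩
  have hη : IsPrimitiveRoot (β ^ (r + δ - 1)) ν := hβ.pow p.pos (hn.trans (mul_comm _ _))
  have hν : 0 < ν := Nat.pos_of_mul_pos_right (hn ▸ p.pos)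
  exact Nat.le_of_pred_lt (lt_card_ne_zero_residueClass hβ hγ hη hZ hc (Nat.mod_lt p hν) hne)

end CyclicCode

section SingletonBound

open Finset Module

section Determines

variable {K ι : Type*} [Field K] {C : Submodule K (ι → K)} {I T : Finset ι}

theorem exists_mem_ne_zero_of_card_lt_finrank (hI : #I < finrank K C) :
    ∃ c ∈ C, c ≠ 0 ∧ ∀ p ∈ I, c p = 0 := by
  have : Module.Finite K C := Module.finite_of_finrank_pos ((Nat.zero_le _).trans_lt hI)
  let restrict : C →ₗ[K] (I → K) := (LinearMap.funLeft K K Subtype.val).comp C.subtype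
  have hker : LinearMap.ker restrict ≠ ⊥ :=
    LinearMap.ker_ne_bot_of_finrank_lt (by simpa using hI)
  obtain ⟨⟨c, hc⟩, hcI, hc0⟩ := Submodule.exists_mem_ne_zero_of_ne_bot hker
  exact ⟨c, hc, by simpa using hc0, fun p hp => congrFun (LinearMap.mem_ker.1 hcI) ⟨p, hp⟩⟩

/-- The coordinates in `I` determine those in `T` for codewords of `C`. As `C` is linear, this
says that a codeword vanishing on `I` vanishes on `T`. -/
def Determines (C : Submodule K (ι → K)) (I T : Finset ι) : Prop :=
  ∀ c ∈ C, (∀ p ∈ I, c p = 0) → ∀ p ∈ T, c p = 0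

theorem Determines.finrank_le [Fintype ι] [DecidableEq ι] (h : Determines C I T) :
    finrank K C ≤ #I + #Tᶜ := by
  by_contra! hlt
  obtain ⟨c, hc, hc0, hcI⟩ :=
    exists_mem_ne_zero_of_card_lt_finrank ((card_union_le I Tᶜ).trans_lt hlt)
  refine hc0 (funext fun p => ?_)
  by_cases hp : p ∈ T
  · exact h c hc (fun q hq => hcI q (mem_union_left _ hq)) p hp
  · exact hcI p (mem_union_right _ (mem_compl.2 hp))

end Determines

variable {F : Type} [Field F] {n r δ : ℕ} {C : Submodule F (Fin n → F)}

theorem wt_add_card_le {c : Fin n → F} {T : Finset (Fin n)} (hT : ∀ p ∈ T, c p = 0) :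
    wt c + #T ≤ n := by
  classical
  have hdisj : Disjoint ({p | c p ≠ 0} : Finset (Fin n)) T :=
    disjoint_left.2 fun p hp hpT => (mem_filter.1 hp).2 (hT p hpT)
  simpa [wt, card_union_of_disjoint hdisj] using card_le_univ (({p | c p ≠ 0} : Finset (Fin n)) ∪ T)

theorem Determines.exists_extension {I T : Finset (Fin n)} (h : Determines C I T)
    (hC : HasLocality (C : Set (Fin n → F)) r δ) (hI : #I < finrank F C) :
    ∃ I' T', Determines C I' T' ∧ #I' ≤ #I + r ∧ #I' + #T + (δ - 1) ≤ #T' + #I := by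
  classical
  obtain ⟨c₀, hc₀, hne, hzero⟩ := exists_mem_ne_zero_of_card_lt_finrank hI
  obtain ⟨p, hp⟩ := Function.ne_iff.1 hne
  obtain ⟨S, hpS, hScard, hS⟩ := hasLocality_submodule_iff.1 hC p
  have hδ : δ ≤ #(S \ T) := (hS c₀ hc₀ ⟨p, hpS, hp⟩).trans <| card_le_card fun q hq => by
    obtain ⟨hqS, hq⟩ := mem_filter.1 hq
    exact mem_sdiff.2 ⟨hqS, fun hqT => hq (h c₀ hc₀ hzero q hqT)⟩
  obtain ⟨R, hRS, hR⟩ := exists_subset_card_eq ((Nat.sub_le δ 1).trans hδ)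
  have hcardI : #(I ∪ (S \ T) \ R) ≤ #I + (#(S \ T) - (δ - 1)) := by
    rw [← hR, ← card_sdiff_of_subset hRS]
    exact card_union_le _ _
  have hcardT : #(T ∪ S) = #T + #(S \ T) := by
    rw [← union_sdiff_self_eq_union, card_union_of_disjoint disjoint_sdiff]
  have hcardS : #(S \ T) ≤ #S := card_le_card sdiff_subset
  refine ⟨I ∪ (S \ T) \ R, T ∪ S, fun c hc hcI => ?_, by omega, by omega⟩
  have hcT : ∀ q ∈ T, c q = 0 := h c hc fun q hq => hcI q (mem_union_left _ hq)
  -- A codeword vanishing on `S \ R` has weight less than `δ` on `S`, so it vanishes on `S`.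
  have hcS : ∀ q ∈ S, c q = 0 := by
    by_contra! hq
    have hsupp : ({q ∈ S | c q ≠ 0} : Finset (Fin n)) ⊆ R := fun q hq => by
      by_contra hqR
      obtain ⟨hqS, hq⟩ := mem_filter.1 hq
      have hqT : q ∉ T := fun hqT => hq (hcT q hqT)
      exact hq (hcI q (by simp [hqS, hqT, hqR]))
    have hpos : 0 < #{q ∈ S | c q ≠ 0} := card_pos.2 (by simpa [Finset.Nonempty] using hq)
    have hle := card_le_card hsupp
    have hge := hS c hc hq
    omega
  intro q hq
  exact (mem_union.1 hq).elim (hcT q) (hcS q)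

theorem HasLocality.exists_determines (hC : HasLocality (C : Set (Fin n → F)) r δ) (w : ℕ)
    (hw : w * r < finrank F C) :
    ∃ I T, Determines C I T ∧ #I ≤ w * r ∧ #I + w * (δ - 1) ≤ #T := by
  induction w with
  | zero => exact ⟨∅, ∅, fun _ _ h => h, by simp, by simp⟩
  | succ w ih =>
    rw [add_one_mul] at hw
    obtain ⟨I, T, hIT, hI, hT⟩ := ih (by omega)
    obtain ⟨I', T', hIT', hI', hT'⟩ := hIT.exists_extension hC (by omega)
    exact ⟨I', T', hIT', by rw [add_one_mul]; omega, by rw [add_one_mul]; omega⟩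

theorem HasLocality.exists_wt_add_le (hC : HasLocality (C : Set (Fin n → F)) r δ) {w : ℕ}
    (hw : w * r < finrank F C) :
    ∃ c ∈ C, c ≠ 0 ∧ wt c + finrank F C + w * (δ - 1) ≤ n + 1 := by
  obtain ⟨I, T, hIT, hI, hT⟩ := hC.exists_determines w hw
  obtain ⟨J, hJT, hJ⟩ : ∃ J ⊆ Tᶜ, #J = finrank F C - 1 - #I :=
    exists_subset_card_eq (by have := hIT.finrank_le; omega)
  obtain ⟨c, hc, hc0, hcIJ⟩ := exists_mem_ne_zero_of_card_lt_finrank (C := C) (I := I ∪ J)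
    ((card_union_le I J).trans_lt (by omega))
  have hcTJ : ∀ p ∈ T ∪ J, c p = 0 := fun p hp => (mem_union.1 hp).elim
    (hIT c hc (fun q hq => hcIJ q (mem_union_left J hq)) p)
    (fun hp => hcIJ p (mem_union_right I hp))
  have hwt := wt_add_card_le hcTJ
  rw [card_union_of_disjoint (disjoint_left.2 fun p hp hpJ => mem_compl.1 (hJT hpJ) hp)] at hwt
  exact ⟨c, hc, hc0, by omega⟩

theorem ceilDiv'_sub_one_mul_lt {k : ℕ} (hk : 0 < k) (r : ℕ) : (ceilDiv' k r - 1) * r < k := by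
  have hle : ceilDiv' k r * r ≤ k + r - 1 := Nat.div_mul_le_self _ r
  rw [Nat.sub_one_mul]
  omega

theorem isMinDist_of_singletonOpt {d : ℕ} (hC : HasLocality (C : Set (Fin n → F)) r δ)
    (hk : 0 < finrank F C) (hopt : SingletonOpt n (finrank F C) r δ d)
    (hd : ∀ c ∈ C, c ≠ 0 → d ≤ wt c) : IsMinDist (C : Set (Fin n → F)) d := by
  obtain ⟨c, hc, hc0, hwt⟩ := hC.exists_wt_add_le (ceilDiv'_sub_one_mul_lt hk r)
  refine ⟨⟨c, hc, hc0, le_antisymm ?_ (hd c hc hc0)⟩, hd⟩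
  unfold SingletonOpt at hopt
  omega

end SingletonBound

section RootExponents

open Finset

/-- The exponents of the roots of the optimal code: one long run, then a run of length `D = δ - 1`
in each later block of `m = r + δ - 1` exponents, shifted by `j`. -/
def rootExponents (m D ν ℓ i j : ℕ) : Finset ℕ :=
  range (ℓ * m + i + D) ∪ (Ico (ℓ + 1) ν).biUnion fun u => Ico (u * m + j) (u * m + j + D)

variable {m D ν ℓ i j : ℕ}

theorem mem_rootExponents {e : ℕ} : e ∈ rootExponents m D ν ℓ i j ↔ e < ℓ * m + i + D ∨
    ∃ u, (ℓ + 1 ≤ u ∧ u < ν) ∧ u * m + j ≤ e ∧ e < u * m + j + D := by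
  simp [rootExponents]

theorem card_rootExponents (him : i + D ≤ m) :
    #(rootExponents m D ν ℓ i j) = ℓ * m + i + D + (ν - (ℓ + 1)) * D := by
  have hblock : ∀ {u v : ℕ}, u < v → u * m + m ≤ v * m := fun {u v} h => by
    simpa only [Nat.succ_mul] using Nat.mul_le_mul_right m h
  have hruns : ((Ico (ℓ + 1) ν : Finset ℕ) : Set ℕ).PairwiseDisjoint
      fun u => Ico (u * m + j) (u * m + j + D) := by
    intro u _ v _ huv
    refine disjoint_left.2 fun e hu hv => ?_
    rw [mem_Ico] at hu hv
    rcases huv.lt_or_gt with h | h <;> have := hblock h <;> omega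
  have hdisj : Disjoint (range (ℓ * m + i + D))
      ((Ico (ℓ + 1) ν).biUnion fun u => Ico (u * m + j) (u * m + j + D)) := by
    refine (disjoint_biUnion_right _ _ _).2 fun u hu => disjoint_left.2 fun e he heu => ?_
    have := hblock (mem_Ico.1 hu).1
    rw [mem_range] at he
    rw [mem_Ico] at heu
    omega
  rw [rootExponents, card_union_of_disjoint hdisj, card_biUnion hruns]
  simp

theorem rootExponents_subset_range (hℓ : ℓ < ν) (hij : j ≤ i) (him : i + D ≤ m) :
    rootExponents m D ν ℓ i j ⊆ range (ν * m) := by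
  have hblock {u : ℕ} (h : u < ν) : u * m + m ≤ ν * m := by
    simpa only [Nat.succ_mul] using Nat.mul_le_mul_right m h
  intro e he
  rw [mem_range]
  rcases mem_rootExponents.1 he with he | ⟨u, ⟨-, hu⟩, -, he⟩
  · have := hblock hℓ
    omega
  · have := hblock hu
    omega

theorem mem_rootExponents_of_lt (hij : j ≤ i) {u e : ℕ} (hu : u < ν) (he : e < D) :
    u * m + j + e ∈ rootExponents m D ν ℓ i j := by
  rw [mem_rootExponents]
  rcases le_or_gt u ℓ with h | h
  · have := Nat.mul_le_mul_right m h
    exact Or.inl (by omega)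
  · exact Or.inr ⟨u, ⟨h, hu⟩, by omega, by omega⟩

end RootExponents

section Optimality

open Finset

variable {r δ ν ℓ i j : ℕ}

/-- The set `A * B` of roots of the optimal code, written with `γ = α ^ t` and `β = α ^ b`. -/
def optimalRoots {M : Type*} [Monoid M] (β γ : M) (r δ ν ℓ i j : ℕ) : Set M :=
  (fun e => γ * β ^ e) '' rootExponents (r + δ - 1) (δ - 1) ν ℓ i j

theorem mul_eq_optimalRoots {M : Type*} [CommMonoid M] (α : M) (t b : ℕ) {r δ : ℕ} (hδ : 2 ≤ δ)
    {A B : Set M}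
    (hA : A = {x | ∃ e ≤ ℓ * (r + δ - 1) + i, x = α ^ (t + e * b)} ∪
      {x | ∃ u, ℓ + 1 ≤ u ∧ u ≤ ν - 1 ∧ x = α ^ (t + (u * (r + δ - 1) + j) * b)})
    (hB : B = {x | ∃ e ≤ δ - 2, x = α ^ (e * b)}) :
    A * B = optimalRoots (α ^ b) (α ^ t) r δ ν ℓ i j := by
  have hroot (e : ℕ) : α ^ t * (α ^ b) ^ e = α ^ (t + e * b) := by
    rw [pow_add, mul_comm e, pow_mul]
  have hprod (a d : ℕ) : α ^ (t + a * b) * α ^ (d * b) = α ^ (t + (a + d) * b) := by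
    rw [← pow_add, add_mul, add_assoc]
  unfold optimalRoots
  generalize r + δ - 1 = m at *
  ext x
  simp only [hroot, Set.mem_mul, Set.mem_image, mem_coe, mem_rootExponents]
  subst hA hB
  constructor
  · rintro ⟨_, ⟨e, he, rfl⟩ | ⟨u, hℓu, huν, rfl⟩, _, ⟨d, hd, rfl⟩, rfl⟩
    · exact ⟨e + d, Or.inl (by omega), (hprod e d).symm⟩
    · exact ⟨u * m + j + d, Or.inr ⟨u, by omega, by omega, by omega⟩, (hprod _ d).symm⟩
  · rintro ⟨e, he | ⟨u, ⟨hℓu, huν⟩, hue, heu⟩, rfl⟩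
    · obtain ⟨a, d, ha, hd, rfl⟩ : ∃ a d, a ≤ ℓ * m + i ∧ d ≤ δ - 2 ∧ e = a + d :=
        ⟨min e (ℓ * m + i), e - (ℓ * m + i), by omega, by omega, by omega⟩
      exact ⟨_, Or.inl ⟨a, ha, rfl⟩, _, ⟨d, hd, rfl⟩, hprod a d⟩
    · obtain ⟨d, rfl⟩ := Nat.exists_eq_add_of_le hue
      exact ⟨_, Or.inr ⟨u, hℓu, by omega, rfl⟩, _, ⟨d, by omega, rfl⟩, hprod _ d⟩

theorem length_eq_card_add_dim (hδ : 1 ≤ δ) (hi : i < r) (hℓ : ℓ < ν) :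
    ν * (r + δ - 1) =
      ℓ * (r + δ - 1) + i + (δ - 1) + (ν - (ℓ + 1)) * (δ - 1) + ((ν - ℓ) * r - i) := by
  obtain ⟨w, rfl⟩ := Nat.exists_eq_add_of_lt hℓ
  obtain ⟨D, rfl⟩ := Nat.exists_eq_add_of_le' hδ
  have hdim : (w + 1) * r - i + i = w * r + r := by rw [add_one_mul]; omega
  simp only [← add_assoc, Nat.add_sub_cancel, show ℓ + w + 1 - ℓ = w + 1 by omega,
    show ℓ + w + 1 - (ℓ + 1) = w by omega]
  linear_combination -hdim

variable {F : Type} [Field F] {β γ : F}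

theorem hasLocality_cyclicCode_optimalRoots (hβ : IsPrimitiveRoot β (ν * (r + δ - 1)))
    (hγ : γ ≠ 0) (hj : j ≤ i) :
    HasLocality (cyclicCode F (ν * (r + δ - 1)) (optimalRoots β γ r δ ν ℓ i j) :
      Set (Fin (ν * (r + δ - 1)) → F)) r δ := by
  rcases eq_or_ne (ν * (r + δ - 1)) 0 with h0 | h0
  · exact fun p => absurd p.pos h0.not_gt
  · exact hasLocality_cyclicCode hβ (mul_ne_zero hγ (pow_ne_zero j (hβ.ne_zero h0))) rfl
      fun u hu e he => ⟨_, mem_rootExponents_of_lt hj hu he, by ring⟩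

theorem finrank_cyclicCode_optimalRoots (hβ : IsPrimitiveRoot β (ν * (r + δ - 1)))
    (hγ : γ ≠ 0) (hδ : 1 ≤ δ) (hi : i < r) (hj : j ≤ i) (hℓ : ℓ < ν) :
    Module.finrank F (cyclicCode F (ν * (r + δ - 1)) (optimalRoots β γ r δ ν ℓ i j)) =
      (ν - ℓ) * r - i := by
  have hsub := rootExponents_subset_range (m := r + δ - 1) (D := δ - 1) hℓ hj (by omega)
  have hinj : Set.InjOn (fun e => γ * β ^ e) (rootExponents (r + δ - 1) (δ - 1) ν ℓ i j) := by
    simpa only [mul_comm] using (hβ.injOn_pow_mul hγ).mono (coe_subset.2 hsub)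
  rw [optimalRoots, finrank_cyclicCode_image hinj ((card_le_card hsub).trans_eq (card_range _)),
    card_rootExponents (by omega)]
  have hlen := length_eq_card_add_dim hδ hi hℓ
  omega

theorem le_wt_of_mem_cyclicCode_optimalRoots (hβ : IsPrimitiveRoot β (ν * (r + δ - 1)))
    (hγ : γ ≠ 0) {c : Fin (ν * (r + δ - 1)) → F}
    (hc : c ∈ cyclicCode F (ν * (r + δ - 1)) (optimalRoots β γ r δ ν ℓ i j)) (hc0 : c ≠ 0) :
    δ + i + ℓ * (r + δ - 1) ≤ wt c := by
  have hrun : ∀ e < ℓ * (r + δ - 1) + i + (δ - 1), γ * β ^ e ∈ optimalRoots β γ r δ ν ℓ i j :=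
    fun e he => ⟨e, mem_rootExponents.2 (Or.inl he), rfl⟩
  have hlt := lt_wt_of_mem_cyclicCode hβ hγ hrun hc hc0
  omega

theorem ceilDiv'_mul_sub {a : ℕ} (ha : 0 < a) (hi : i < r) : ceilDiv' (a * r - i) r = a := by
  obtain ⟨w, rfl⟩ := Nat.exists_eq_add_of_lt ha
  unfold ceilDiv'
  apply Nat.div_eq_of_lt_le <;> simp only [add_mul, one_mul] <;> omega

theorem singletonOpt_of_lt (hδ : 1 ≤ δ) (hi : i < r) (hℓ : ℓ < ν) :
    SingletonOpt (ν * (r + δ - 1)) ((ν - ℓ) * r - i) r δ (δ + i + ℓ * (r + δ - 1)) := by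
  unfold SingletonOpt
  rw [ceilDiv'_mul_sub (by omega) hi, Nat.sub_sub ν]
  have hlen := length_eq_card_add_dim hδ hi hℓ
  omega

end Optimality

theorem stmt8_general (F : Type) [Field F] (n r δ b t i ℓ j : ℕ) (hδ : 2 ≤ δ)
    (hb : Nat.Coprime b n) (hrdn : (r + δ - 1) ∣ n) (α : F) (hα : IsPrimitiveRoot α n)
    (hi : i < r) (hℓ : ℓ < n / (r + δ - 1)) (hj : j ≤ i) (A B : Set F)
    (hAdef : A = {x : F | ∃ e ≤ ℓ * (r + δ - 1) + i, x = α ^ (t + e * b)} ∪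
      {x : F | ∃ u, ℓ + 1 ≤ u ∧ u ≤ n / (r + δ - 1) - 1 ∧
        x = α ^ (t + (u * (r + δ - 1) + j) * b)})
    (hBdef : B = {x : F | ∃ e ≤ δ - 2, x = α ^ (e * b)}) :
    HasLocality (cyclicCode F n (A * B) : Set (Fin n → F)) r δ ∧
    Module.finrank F (cyclicCode F n (A * B)) = (n / (r + δ - 1) - ℓ) * r - i ∧
    IsMinDist (cyclicCode F n (A * B) : Set (Fin n → F))
      (δ + i + ℓ * (r + δ - 1)) ∧
    SingletonOpt n ((n / (r + δ - 1) - ℓ) * r - i) r δ (δ + i + ℓ * (r + δ - 1)) := by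
  rw [mul_eq_optimalRoots α t b hδ hAdef hBdef]
  obtain ⟨ν, hν⟩ : ∃ ν, ν = n / (r + δ - 1) := ⟨_, rfl⟩
  obtain rfl : n = ν * (r + δ - 1) := by rw [hν, Nat.div_mul_cancel hrdn]
  rw [← hν] at hℓ ⊢
  have hβ : IsPrimitiveRoot (α ^ b) (ν * (r + δ - 1)) := hα.pow_of_coprime b hb
  have hγ : α ^ t ≠ 0 := pow_ne_zero t (hα.ne_zero (Nat.mul_pos (by omega) (by omega)).ne')
  have hlocal := hasLocality_cyclicCode_optimalRoots (ℓ := ℓ) hβ hγ hj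
  have hdim := finrank_cyclicCode_optimalRoots hβ hγ (by omega) hi hj hℓ
  have hpos : i < (ν - ℓ) * r := hi.trans_le (Nat.le_mul_of_pos_left r (by omega))
  have hopt := singletonOpt_of_lt (δ := δ) (by omega) hi hℓ
  exact ⟨hlocal, hdim, isMinDist_of_singletonOpt hlocal (by omega) (hdim ▸ hopt) fun c hc hc0 =>
    le_wt_of_mem_cyclicCode_optimalRoots hβ hγ hc hc0, hopt⟩

/-- explicit construction (Corollary 4.2 of the paper) of optimal cyclic
`(r,δ)`-LRCs of length `n ∣ q - 1` with `(r+δ-1) ∣ n`. -/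
theorem stmt8 (F : Type) [Field F] [Fintype F] (n r δ b t i ℓ j : ℕ)
    (hn : 0 < n) (hr : 0 < r) (hδ : 2 ≤ δ)
    (hdvd : n ∣ Fintype.card F - 1) (hb : Nat.Coprime b n)
    (hrdn : (r + δ - 1) ∣ n)
    (α : F) (hα : IsPrimitiveRoot α n)
    (ht : t ≤ n - 1) (hi : i ≤ r - 1)
    (hcase : (ℓ ≤ n / (r + δ - 1) - 3 ∧ j ≤ i) ∨ (ℓ = n / (r + δ - 1) - 2 ∧ j = i))
    (A B : Set F)
    (hAdef : A = {x : F | ∃ e ≤ ℓ * (r + δ - 1) + i, x = α ^ (t + e * b)} ∪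
      {x : F | ∃ u, ℓ + 1 ≤ u ∧ u ≤ n / (r + δ - 1) - 1 ∧
        x = α ^ (t + (u * (r + δ - 1) + j) * b)})
    (hBdef : B = {x : F | ∃ e ≤ δ - 2, x = α ^ (e * b)}) :
    HasLocality (cyclicCode F n (A * B) : Set (Fin n → F)) r δ ∧
    Module.finrank F (cyclicCode F n (A * B)) = (n / (r + δ - 1) - ℓ) * r - i ∧
    IsMinDist (cyclicCode F n (A * B) : Set (Fin n → F))
      (δ + i + ℓ * (r + δ - 1)) ∧
    SingletonOpt n ((n / (r + δ - 1) - ℓ) * r - i) r δ (δ + i + ℓ * (r + δ - 1)) := by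
  have hν : 0 < n / (r + δ - 1) := Nat.div_pos (Nat.le_of_dvd hn hrdn) (by omega)
  exact stmt8_general F n r δ b t i ℓ j hδ hb hrdn α hα (by omega) (by omega) (by omega) A B
    hAdef hBdef
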